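/- arXiv:1002.2808 — 2 statements merged into one kernel-verified Lean document; each statement's English description precedes it below -/
import Mathlib

section
/- For real a, real c ≠ 0, and b > 0, as t → ∞ one has ∫_0^b e^{it(a + c x²)} dx = A₀ · e^{iat}/(2(|c|t)^{1/2}) − (i/(2 b c t)) e^{i(a + c b²)t} + O(1/(b³ (ct)²)), where A₀ = e^{(πi/4)·sgn(c)} √π. -/
open Filter Asymptotics

/-!
Write `∫₀ᵇ = ∫₀^∞ - ∫_b^∞` for the complex Gaussian `exp (-β x²)` with `Re β > 0`, and integrate the
tail by parts twice: the first boundary term is kept, while the second one and the remaining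
integral are at most `1 / (4 ‖β‖² b³)` each. This bound does not degenerate as `Re β → 0`, so by
continuity it persists on the imaginary axis, where `β = -i c t` gives the oscillatory integral and
`(π / β) ^ (1 / 2)` the constant `A₀`.
-/

section GaussianTail

open Complex MeasureTheory Set
open scoped Real Topology

variable {β : ℂ} {b : ℝ}

lemma norm_cexp_neg_mul_sq_le_one (hβ : 0 ≤ β.re) (x : ℝ) : ‖exp (-β * (x : ℂ) ^ 2)‖ ≤ 1 := by
  rw [norm_cexp_neg_mul_sq, Real.exp_le_one_iff, neg_mul, neg_nonpos]
  positivity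

/-- The boundary terms of two integrations by parts of `exp (-β x²)`: a primitive of it up to
`gaussianTailDefect`, vanishing at infinity. -/
noncomputable def gaussianTailPrimitive (β : ℂ) (x : ℝ) : ℂ :=
  exp (-β * (x : ℂ) ^ 2) * (1 / (4 * β ^ 2 * (x : ℂ) ^ 3) - 1 / (2 * β * x))

/-- The integrand left over after two integrations by parts of `exp (-β x²)`, that is,
`exp (-β x²)` minus the derivative of `gaussianTailPrimitive β`. -/
noncomputable def gaussianTailDefect (β : ℂ) (x : ℝ) : ℂ :=
  exp (-β * (x : ℂ) ^ 2) * (3 / (4 * β ^ 2 * (x : ℂ) ^ 4))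

lemma hasDerivAt_gaussianTailPrimitive (hβ : β ≠ 0) {x : ℝ} (hx : x ≠ 0) :
    HasDerivAt (gaussianTailPrimitive β)
      (exp (-β * (x : ℂ) ^ 2) - gaussianTailDefect β x) x := by
  have hx' : (x : ℂ) ≠ 0 := ofReal_ne_zero.2 hx
  have hid : HasDerivAt (fun z : ℂ => z) 1 (x : ℂ) := hasDerivAt_id _
  have hexp := ((hid.fun_pow 2).const_mul (-β)).cexp
  have hcube := ((hid.fun_pow 3).const_mul (4 * β ^ 2)).fun_inv (by simp [hβ, hx])
  have hlin := (hid.const_mul (2 * β)).fun_inv (by simp [hβ, hx])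
  convert (hexp.fun_mul (hcube.fun_sub hlin)).comp_ofReal using 1
  · funext y
    simp only [gaussianTailPrimitive, one_div]
  · simp only [gaussianTailDefect]
    field_simp
    ring

lemma tendsto_gaussianTailPrimitive_atTop (hβ : 0 ≤ β.re) :
    Tendsto (gaussianTailPrimitive β) atTop (𝓝 0) := by
  have hinv : Tendsto (fun x : ℝ => (x : ℂ)⁻¹) atTop (𝓝 0) :=
    tendsto_inv₀_cobounded.comp (RCLike.tendsto_ofReal_atTop_cobounded ℂ)
  have hfactor : Tendsto (fun x : ℝ => 1 / (4 * β ^ 2 * (x : ℂ) ^ 3) - 1 / (2 * β * x))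
      atTop (𝓝 0) := by
    convert ((hinv.pow 3).const_mul (1 / (4 * β ^ 2))).sub (hinv.const_mul (1 / (2 * β))) using 2
    · field_simp
    · simp
  refine squeeze_zero_norm (fun x => ?_) (tendsto_zero_iff_norm_tendsto_zero.1 hfactor)
  rw [gaussianTailPrimitive, norm_mul]
  exact mul_le_of_le_one_left (norm_nonneg _) (norm_cexp_neg_mul_sq_le_one hβ x)

lemma norm_gaussianTailDefect_le (hβ : 0 ≤ β.re) {x : ℝ} (hx : 0 ≤ x) :
    ‖gaussianTailDefect β x‖ ≤ 3 / (4 * ‖β‖ ^ 2) * x ^ (-4 : ℝ) := by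
  calc ‖gaussianTailDefect β x‖
      ≤ ‖3 / (4 * β ^ 2 * (x : ℂ) ^ 4)‖ := by
        rw [gaussianTailDefect, norm_mul]
        exact mul_le_of_le_one_left (norm_nonneg _) (norm_cexp_neg_mul_sq_le_one hβ x)
    _ = 3 / (4 * ‖β‖ ^ 2) * x ^ (-4 : ℝ) := by
        rw [Real.rpow_neg hx, Real.rpow_ofNat]
        simp [field, abs_of_nonneg hx]

lemma integrableOn_gaussianTailDefect (hβ : 0 ≤ β.re) (hb : 0 < b) :
    IntegrableOn (gaussianTailDefect β) (Ioi b) := by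
  refine ((integrableOn_Ioi_rpow_of_lt (by norm_num : (-4 : ℝ) < -1) hb).const_mul
    (3 / (4 * ‖β‖ ^ 2))).mono' ?_ ?_
  · unfold gaussianTailDefect
    exact Measurable.aestronglyMeasurable (by fun_prop)
  · exact ae_restrict_of_forall_mem measurableSet_Ioi fun x hx =>
      norm_gaussianTailDefect_le hβ (hb.trans hx).le

lemma norm_integral_gaussianTailDefect_le (hβ : 0 ≤ β.re) (hb : 0 < b) :
    ‖∫ x in Ioi b, gaussianTailDefect β x‖ ≤ 1 / (4 * ‖β‖ ^ 2 * b ^ 3) := by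
  have hexponent : (-4 : ℝ) < -1 := by norm_num
  calc ‖∫ x in Ioi b, gaussianTailDefect β x‖
      ≤ ∫ x in Ioi b, 3 / (4 * ‖β‖ ^ 2) * x ^ (-4 : ℝ) :=
        norm_integral_le_of_norm_le ((integrableOn_Ioi_rpow_of_lt hexponent hb).const_mul _)
          (ae_restrict_of_forall_mem measurableSet_Ioi fun x hx =>
            norm_gaussianTailDefect_le hβ (hb.trans hx).le)
    _ = 1 / (4 * ‖β‖ ^ 2 * b ^ 3) := by
        rw [integral_const_mul, integral_Ioi_rpow_of_lt hexponent hb,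
          show (-4 : ℝ) + 1 = -3 by norm_num, Real.rpow_neg hb.le, Real.rpow_ofNat]
        field_simp

lemma integral_Ioi_cexp_neg_mul_sq (hβ : 0 < β.re) (hb : 0 < b) :
    ∫ x : ℝ in Ioi b, exp (-β * (x : ℂ) ^ 2) =
      (∫ x in Ioi b, gaussianTailDefect β x) - gaussianTailPrimitive β b := by
  have hβ0 : β ≠ 0 := by rintro rfl; simp at hβ
  have hgauss := (integrable_cexp_neg_mul_sq hβ).integrableOn (s := Ioi b)
  have hdefect := integrableOn_gaussianTailDefect hβ.le hb
  have hftc := integral_Ioi_of_hasDerivAt_of_tendsto'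
    (fun x hx => hasDerivAt_gaussianTailPrimitive hβ0 (hb.trans_le hx).ne')
    (hgauss.sub hdefect) (tendsto_gaussianTailPrimitive_atTop hβ.le)
  rw [integral_sub hgauss hdefect] at hftc
  linear_combination hftc

/-- The error of approximating the truncated Gaussian integral `∫₀ᵇ exp (-β x²) dx` by its limit as
`b → ∞` and the leading boundary term at `b`. -/
noncomputable def gaussianError (β : ℂ) (b : ℝ) : ℂ :=
  (∫ x in (0 : ℝ)..b, exp (-β * (x : ℂ) ^ 2)) -
    ((π / β : ℂ) ^ (1 / 2 : ℂ) / 2 - exp (-β * (b : ℂ) ^ 2) / (2 * β * b))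

lemma norm_gaussianError_le_of_re_pos (hβ : 0 < β.re) (hb : 0 < b) :
    ‖gaussianError β b‖ ≤ 1 / (2 * ‖β‖ ^ 2 * b ^ 3) := by
  have hgauss := integrable_cexp_neg_mul_sq hβ
  have hsplit := intervalIntegral.integral_interval_add_Ioi
    (hgauss.integrableOn (s := Ioi 0)) (hgauss.integrableOn (s := Ioi b))
  rw [integral_gaussian_complex_Ioi hβ, integral_Ioi_cexp_neg_mul_sq hβ hb] at hsplit
  calc ‖gaussianError β b‖
      = ‖exp (-β * (b : ℂ) ^ 2) * (1 / (4 * β ^ 2 * (b : ℂ) ^ 3)) -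
          ∫ x in Ioi b, gaussianTailDefect β x‖ := by
        congr 1
        rw [gaussianTailPrimitive] at hsplit
        rw [gaussianError]
        linear_combination hsplit
    _ ≤ ‖exp (-β * (b : ℂ) ^ 2)‖ * ‖1 / (4 * β ^ 2 * (b : ℂ) ^ 3)‖ +
          ‖∫ x in Ioi b, gaussianTailDefect β x‖ := by
        rw [← norm_mul]
        exact norm_sub_le _ _
    _ ≤ 1 * (1 / (4 * ‖β‖ ^ 2 * b ^ 3)) + 1 / (4 * ‖β‖ ^ 2 * b ^ 3) := by
        gcongr
        · exact norm_cexp_neg_mul_sq_le_one hβ.le b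
        · simp [abs_of_pos hb]
        · exact norm_integral_gaussianTailDefect_le hβ.le hb
    _ = 1 / (2 * ‖β‖ ^ 2 * b ^ 3) := by ring

lemma pi_div_mem_slitPlane (hβ : 0 ≤ β.re) (hβ0 : β ≠ 0) : (π / β : ℂ) ∈ slitPlane := by
  have hscale : 0 < π / normSq β := div_pos Real.pi_pos (normSq_pos.2 hβ0)
  have hre : (π / β : ℂ).re = π / normSq β * β.re := by
    rw [div_eq_mul_inv, re_ofReal_mul, inv_re]
    ring
  have him : (π / β : ℂ).im = -(π / normSq β * β.im) := by
    rw [div_eq_mul_inv, im_ofReal_mul, inv_im]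
    ring
  rw [mem_slitPlane_iff, hre, him]
  rcases hβ.eq_or_lt with hzero | hpos
  · exact .inr (neg_ne_zero.2 (mul_ne_zero hscale.ne' fun h => hβ0 (Complex.ext hzero.symm h)))
  · exact .inl (mul_pos hscale hpos)

lemma continuousAt_gaussianError (hβ : 0 ≤ β.re) (hβ0 : β ≠ 0) (hb : b ≠ 0) :
    ContinuousAt (fun z => gaussianError z b) β := by
  have hintegral : Continuous fun z : ℂ => ∫ x in (0 : ℝ)..b, exp (-z * (x : ℂ) ^ 2) :=
    intervalIntegral.continuous_parametric_intervalIntegral_of_continuous' (by fun_prop) 0 b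
  have hroot : ContinuousAt (fun z : ℂ => (π / z : ℂ) ^ (1 / 2 : ℂ)) β :=
    (continuousAt_const.div continuousAt_id hβ0).cpow continuousAt_const
      (pi_div_mem_slitPlane hβ hβ0)
  have hboundary : ContinuousAt (fun z : ℂ => exp (-z * (b : ℂ) ^ 2) / (2 * z * b)) β :=
    ContinuousAt.div (by fun_prop) (by fun_prop) (by simp [hβ0, hb])
  exact hintegral.continuousAt.sub ((hroot.div_const 2).sub hboundary)

lemma norm_gaussianError_le (hβ : 0 ≤ β.re) (hβ0 : β ≠ 0) (hb : 0 < b) :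
    ‖gaussianError β b‖ ≤ 1 / (2 * ‖β‖ ^ 2 * b ^ 3) := by
  have hclosure : β ∈ closure {z : ℂ | 0 < z.re} := by
    rw [closure_setOfPred_lt_re]
    exact hβ
  have hbound : ContinuousAt (fun z : ℂ => 1 / (2 * ‖z‖ ^ 2 * b ^ 3)) β :=
    continuousAt_const.div (by fun_prop) (by positivity)
  exact (continuousAt_gaussianError hβ hβ0 hb.ne').norm.continuousWithinAt.closure_le hclosure
    hbound.continuousWithinAt fun z hz => norm_gaussianError_le_of_re_pos hz hb

end GaussianTail

section Fresnel

open Complex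
open scoped Real

lemma re_exp_pi_div_four_mul_sign_pos (s : ℝ) :
    0 < (exp (π * I / 4 * (Real.sign s : ℝ))).re := by
  have hangle : (π * I / 4 * (Real.sign s : ℝ) : ℂ) = (π / 4 * Real.sign s : ℝ) * I := by
    push_cast
    ring
  rw [hangle, exp_ofReal_mul_I_re]
  rcases Real.sign_apply_eq s with h | h | h <;> simp [h]

lemma exp_pi_div_four_mul_sign_sq {s : ℝ} (hs : s ≠ 0) :
    exp (π * I / 4 * (Real.sign s : ℝ)) ^ 2 = (Real.sign s : ℝ) * I := by
  have hdouble : exp (π * I / 4 * (Real.sign s : ℝ)) ^ 2 =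
      exp ((Real.sign s : ℝ) * π / 2 * I) := by
    rw [← exp_nat_mul]
    push_cast
    ring_nf
  rcases Real.sign_apply_eq_of_ne_zero s hs with h | h <;> rw [hdouble, h] <;> simp

lemma cpow_one_half_pi_div_neg_I_mul {s : ℝ} (hs : s ≠ 0) :
    (π / (-I * s) : ℂ) ^ (1 / 2 : ℂ) =
      exp (π * I / 4 * (Real.sign s : ℝ)) * (√π : ℂ) / (√|s| : ℂ) := by
  set w : ℂ := exp (π * I / 4 * (Real.sign s : ℝ)) * (√π : ℂ) / (√|s| : ℂ) with hw
  have hw_re : 0 < w.re := by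
    rw [hw, mul_div_assoc, ← ofReal_div, re_mul_ofReal]
    exact mul_pos (re_exp_pi_div_four_mul_sign_pos s) (by positivity)
  have hsign : Real.sign s / |s| = 1 / s := by
    rcases hs.lt_or_gt with h | h
    · rw [Real.sign_of_neg h, abs_of_neg h, neg_div_neg_eq]
    · rw [Real.sign_of_pos h, abs_of_pos h]
  have hw_sq : w ^ 2 = π / (-I * s) := by
    calc w ^ 2 = ((Real.sign s / |s| : ℝ) : ℂ) * π * I := by
          rw [hw, div_pow, mul_pow, exp_pi_div_four_mul_sign_sq hs, ← ofReal_pow, ← ofReal_pow,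
            Real.sq_sqrt Real.pi_pos.le, Real.sq_sqrt (abs_nonneg s)]
          push_cast
          ring
      _ = π / (-I * s) := by
          rw [hsign]
          push_cast
          rw [neg_mul, div_neg, mul_comm I, ← div_div, div_I]
          ring
  rw [← hw_sq, one_div, sq_cpow_two_inv hw_re]

lemma norm_integral_cexp_I_mul_sq_sub_le {s b : ℝ} (hs : s ≠ 0) (hb : 0 < b) :
    ‖(∫ x in (0 : ℝ)..b, exp (I * s * (x : ℂ) ^ 2)) -
        (exp (π * I / 4 * (Real.sign s : ℝ)) * (√π : ℂ) / (2 * (√|s| : ℂ)) -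
          I / (2 * b * s) * exp (I * s * (b : ℂ) ^ 2))‖ ≤
      1 / 2 * (1 / (b ^ 3 * s ^ 2)) := by
  have herror : gaussianError (-I * s) b = (∫ x in (0 : ℝ)..b, exp (I * s * (x : ℂ) ^ 2)) -
      (exp (π * I / 4 * (Real.sign s : ℝ)) * (√π : ℂ) / (2 * (√|s| : ℂ)) -
        I / (2 * b * s) * exp (I * s * (b : ℂ) ^ 2)) := by
    have hneg : -(-I * s) = I * s := by ring
    have hinv : 1 / (-I * s) = I / s := by
      rw [one_div, mul_inv, inv_neg, inv_I, neg_neg, div_eq_mul_inv]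
    rw [gaussianError, hneg, cpow_one_half_pi_div_neg_I_mul hs]
    linear_combination exp (I * s * (b : ℂ) ^ 2) / (2 * b) * hinv
  have hnorm : ‖-I * (s : ℂ)‖ ^ 2 = s ^ 2 := by simp
  rw [← herror]
  refine (norm_gaussianError_le (by simp) (by simp [hs]) hb).trans_eq ?_
  rw [hnorm]
  ring

lemma norm_integral_cexp_I_mul_add_mul_sq_sub_le (θ : ℝ) {s b : ℝ} (hs : s ≠ 0) (hb : 0 < b) :
    ‖(∫ x in (0 : ℝ)..b, exp (I * (θ + s * (x : ℂ) ^ 2))) -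
        (exp (π * I / 4 * (Real.sign s : ℝ)) * (√π : ℂ) * exp (I * θ) / (2 * (√|s| : ℂ)) -
          I / (2 * b * s) * exp (I * (θ + s * (b : ℂ) ^ 2)))‖ ≤
      1 / 2 * (1 / (b ^ 3 * s ^ 2)) := by
  have hphase (x : ℝ) :
      exp (I * (θ + s * (x : ℂ) ^ 2)) = exp (I * θ) * exp (I * s * (x : ℂ) ^ 2) := by
    rw [← exp_add]
    ring_nf
  calc _ = ‖exp (I * θ) * ((∫ x in (0 : ℝ)..b, exp (I * s * (x : ℂ) ^ 2)) -
        (exp (π * I / 4 * (Real.sign s : ℝ)) * (√π : ℂ) / (2 * (√|s| : ℂ)) -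
          I / (2 * b * s) * exp (I * s * (b : ℂ) ^ 2)))‖ := by
        simp only [hphase, intervalIntegral.integral_const_mul]
        ring_nf
    _ ≤ 1 / 2 * (1 / (b ^ 3 * s ^ 2)) := by
        rw [norm_mul, norm_exp_I_mul_ofReal, one_mul]
        exact norm_integral_cexp_I_mul_sq_sub_le hs hb

end Fresnel

lemma sign_mul_of_pos_right (c : ℝ) {t : ℝ} (ht : 0 < t) :
    Real.sign (c * t) = Real.sign c := by
  rcases lt_trichotomy c 0 with h | rfl | h
  · rw [Real.sign_of_neg h, Real.sign_of_neg (mul_neg_of_neg_of_pos h ht)]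
  · rw [zero_mul]
  · rw [Real.sign_of_pos h, Real.sign_of_pos (mul_pos h ht)]

theorem quadratic_phase_integral_asymptotic (a c b : ℝ) (hc : c ≠ 0) (hb : 0 < b) :
    (fun t : ℝ =>
      (∫ x in (0:ℝ)..b, Complex.exp (Complex.I * t * (a + c * x ^ 2))) -
        ((Complex.exp (Real.pi * Complex.I / 4 * (Real.sign c : ℝ)) * (Real.sqrt Real.pi : ℂ)) *
            Complex.exp (Complex.I * a * t) / (2 * (Real.sqrt (|c| * t) : ℂ)) -
          Complex.I / (2 * b * c * t) * Complex.exp (Complex.I * (a + c * b ^ 2) * t)))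
      =O[atTop] (fun t : ℝ => 1 / (b ^ 3 * (c * t) ^ 2)) := by
  refine IsBigO.of_bound (1 / 2) ?_
  filter_upwards [eventually_gt_atTop 0] with t ht
  have hbound := norm_integral_cexp_I_mul_add_mul_sq_sub_le (a * t) (mul_ne_zero hc ht.ne') hb
  rw [sign_mul_of_pos_right c ht, abs_mul, abs_of_pos ht] at hbound
  have hphase (x : ℝ) : Complex.I * t * (a + c * x ^ 2) =
      Complex.I * ((a * t : ℝ) + (c * t : ℝ) * (x : ℂ) ^ 2) := by
    push_cast
    ring
  rw [Real.norm_of_nonneg (by positivity)]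
  convert hbound using 4
  · simp only [hphase]
  · push_cast
    ring_nf
  · push_cast
    ring_nf
end

section
/- The improper integral ∫_0^∞ u^{−1/2} e^{i u σ} du equals e^{(πi/4)σ} √π for σ = ±1. -/
open Filter

/-!
Substituting `u = x ^ 2` turns the integral into a Gaussian integral with purely imaginary
parameter `b = -I * σ`. For `0 < b.re` the Gaussian integral is classical. One integration by parts
bounds the tail of `∫ cexp (-b * x ^ 2)` beyond `R` by `1 / (‖b‖ * R)` throughout `0 ≤ b.re`. For
fixed `R` the resulting error estimate is continuous in `b`, so it passes to the boundary
`b.re = 0`, where absolute convergence is lost.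
-/

open Complex MeasureTheory Set
open scoped Real Topology

section GaussianIntegral

variable {b : ℂ} {R T : ℝ}

lemma norm_cexp_neg_mul_sq_le_one_s2 (hb : 0 ≤ b.re) (x : ℝ) : ‖cexp (-b * x ^ 2)‖ ≤ 1 := by
  rw [norm_cexp_neg_mul_sq, Real.exp_le_one_iff, neg_mul, neg_nonpos]
  positivity

lemma hasDerivAt_cexp_neg_mul_sq_div (b : ℂ) {x : ℝ} (hx : x ≠ 0) :
    HasDerivAt (fun y : ℝ ↦ cexp (-b * y ^ 2) / (2 * y))
      (-(b * cexp (-b * x ^ 2) + cexp (-b * x ^ 2) / (2 * x ^ 2))) x := by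
  have hx' : (x : ℂ) ≠ 0 := ofReal_ne_zero.2 hx
  have hid : HasDerivAt (fun y : ℝ ↦ (y : ℂ)) 1 x := ofRealCLM.hasDerivAt
  refine (((hid.pow 2).const_mul (-b)).cexp.div (hid.const_mul 2) (by simpa)).congr_deriv ?_
  simp only [Nat.cast_ofNat, Nat.add_one_sub_one, pow_one, Pi.pow_apply]
  field_simp
  ring

lemma mul_integral_cexp_neg_mul_sq (b : ℂ) (h : 0 ∉ uIcc R T) :
    b * ∫ x in R..T, cexp (-b * x ^ 2) =
      cexp (-b * R ^ 2) / (2 * R) - cexp (-b * T ^ 2) / (2 * T) -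
        ∫ x in R..T, cexp (-b * x ^ 2) / (2 * x ^ 2) := by
  have ne_zero {x : ℝ} (hx : x ∈ uIcc R T) : x ≠ 0 := ne_of_mem_of_not_mem hx h
  have hint : IntervalIntegrable (fun x : ℝ ↦ b * cexp (-b * x ^ 2)) volume R T :=
    Continuous.intervalIntegrable (by fun_prop) _ _
  have hint' : IntervalIntegrable (fun x : ℝ ↦ cexp (-b * x ^ 2) / (2 * x ^ 2)) volume R T :=
    ContinuousOn.intervalIntegrable <| ContinuousOn.div (by fun_prop) (by fun_prop)
      fun x hx ↦ by simpa using ne_zero hx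
  have hFTC := intervalIntegral.integral_eq_sub_of_hasDerivAt
    (fun x hx ↦ hasDerivAt_cexp_neg_mul_sq_div b (ne_zero hx)) (hint.add hint').neg
  rw [intervalIntegral.integral_neg, intervalIntegral.integral_add hint hint',
    intervalIntegral.integral_const_mul] at hFTC
  linear_combination -hFTC

lemma integral_one_div_two_mul_sq (h : 0 ∉ uIcc R T) :
    ∫ x in R..T, 1 / (2 * x ^ 2) = 1 / (2 * R) - 1 / (2 * T) := by
  calc
    _ = ∫ x in R..T, 1 / 2 * x ^ (-2 : ℤ) := by
      congr! 2 with x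
      rw [zpow_neg, ← one_div, one_div_mul_one_div, zpow_ofNat]
    _ = 1 / 2 * ((T ^ (-1 : ℤ) - R ^ (-1 : ℤ)) / (-1)) := by
      rw [intervalIntegral.integral_const_mul, integral_zpow (Or.inr ⟨by decide, h⟩)]
      norm_num
    _ = _ := by
      rw [zpow_neg_one, zpow_neg_one, ← one_div_mul_one_div, ← one_div_mul_one_div]
      ring

lemma norm_mul_norm_integral_cexp_neg_mul_sq_le (hb : 0 ≤ b.re) (hR : 0 < R) (hRT : R ≤ T) :
    ‖b‖ * ‖∫ x in R..T, cexp (-b * x ^ 2)‖ ≤ 1 / R := by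
  have hT : 0 < T := hR.trans_le hRT
  have h0 : 0 ∉ uIcc R T := notMem_uIcc_of_lt hR hT
  have hboundary {y : ℝ} (hy : 0 < y) : ‖cexp (-b * y ^ 2) / (2 * y)‖ ≤ 1 / (2 * y) := by
    rw [norm_div, norm_mul, norm_real, Real.norm_of_nonneg hy.le, Complex.norm_two]
    gcongr
    exact norm_cexp_neg_mul_sq_le_one_s2 hb y
  have hintegral : ‖∫ x in R..T, cexp (-b * x ^ 2) / (2 * x ^ 2)‖ ≤ 1 / (2 * R) - 1 / (2 * T) := by
    rw [← integral_one_div_two_mul_sq h0]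
    refine intervalIntegral.norm_integral_le_of_norm_le hRT (ae_of_all _ fun x _ ↦ ?_)
      (ContinuousOn.intervalIntegrable <| ContinuousOn.div (by fun_prop) (by fun_prop)
        fun x hx ↦ by simpa using ne_of_mem_of_not_mem hx h0)
    rw [norm_div, norm_mul, norm_pow, norm_real, Real.norm_eq_abs, sq_abs, Complex.norm_two]
    gcongr
    exact norm_cexp_neg_mul_sq_le_one_s2 hb x
  rw [← norm_mul, mul_integral_cexp_neg_mul_sq b h0]
  calc _ ≤ 1 / (2 * R) + 1 / (2 * T) + (1 / (2 * R) - 1 / (2 * T)) :=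
        norm_sub_le_of_le (norm_sub_le_of_le (hboundary hR) (hboundary hT)) hintegral
    _ = 1 / R := by field_simp; ring

lemma norm_mul_norm_sub_integral_cexp_neg_mul_sq_le_of_re_pos (hb : 0 < b.re) (hR : 0 < R) :
    ‖b‖ * ‖(π / b) ^ (1 / 2 : ℂ) / 2 - ∫ x in (0 : ℝ)..R, cexp (-b * x ^ 2)‖ ≤ 1 / R := by
  have hint := integrable_cexp_neg_mul_sq hb
  have htail : Tendsto (fun T : ℝ ↦ ∫ x in R..T, cexp (-b * x ^ 2)) atTop
      (𝓝 ((π / b) ^ (1 / 2 : ℂ) / 2 - ∫ x in (0 : ℝ)..R, cexp (-b * x ^ 2))) := by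
    rw [← integral_gaussian_complex_Ioi hb]
    refine ((intervalIntegral_tendsto_integral_Ioi 0 hint.integrableOn tendsto_id).sub_const
      _).congr fun T ↦ ?_
    exact intervalIntegral.integral_interval_sub_left hint.intervalIntegrable
      hint.intervalIntegrable
  refine le_of_tendsto (htail.norm.const_mul ‖b‖) ?_
  filter_upwards [eventually_ge_atTop R] with T hRT
  exact norm_mul_norm_integral_cexp_neg_mul_sq_le hb.le hR hRT

lemma ofReal_div_mem_slitPlane {r : ℝ} (hr : 0 < r) (hb : 0 ≤ b.re) (hb0 : b ≠ 0) :
    r / b ∈ slitPlane := by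
  have hnormSq : 0 < normSq b := normSq_pos.2 hb0
  rcases hb.lt_or_eq with hre | hre
  · left
    simpa [div_re] using by positivity
  · right
    have him : b.im ≠ 0 := fun him ↦ hb0 (Complex.ext hre.symm him)
    simp [div_im, hr.ne', him, hnormSq.ne']

lemma norm_mul_norm_sub_integral_cexp_neg_mul_sq_le (hb : 0 ≤ b.re) (hb0 : b ≠ 0) (hR : 0 < R) :
    ‖b‖ * ‖(π / b) ^ (1 / 2 : ℂ) / 2 - ∫ x in (0 : ℝ)..R, cexp (-b * x ^ 2)‖ ≤ 1 / R := by
  have hmem : b ∈ closure {z : ℂ | 0 < z.re} := by rwa [closure_setOfPred_lt_re]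
  have hlimit : ContinuousAt (fun z : ℂ ↦ (π / z) ^ (1 / 2 : ℂ) / 2) b :=
    ((continuousAt_const.div continuousAt_id hb0).cpow continuousAt_const
      (ofReal_div_mem_slitPlane Real.pi_pos hb hb0)).div_const 2
  have hintegral : Continuous fun z : ℂ ↦ ∫ x in (0 : ℝ)..R, cexp (-z * x ^ 2) :=
    intervalIntegral.continuous_parametric_intervalIntegral_of_continuous' (by fun_prop) 0 R
  exact ContinuousWithinAt.closure_le hmem
    (continuousAt_id.norm.mul (hlimit.sub hintegral.continuousAt).norm).continuousWithinAt
    continuousWithinAt_const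
    fun z hz ↦ norm_mul_norm_sub_integral_cexp_neg_mul_sq_le_of_re_pos hz hR

lemma tendsto_integral_cexp_neg_mul_sq (hb : 0 ≤ b.re) (hb0 : b ≠ 0) :
    Tendsto (fun R : ℝ ↦ ∫ x in (0 : ℝ)..R, cexp (-b * x ^ 2)) atTop
      (𝓝 ((π / b) ^ (1 / 2 : ℂ) / 2)) := by
  rw [tendsto_iff_norm_sub_tendsto_zero]
  refine squeeze_zero' (.of_forall fun _ ↦ norm_nonneg _) ?_
    (by simpa using tendsto_inv_atTop_zero.div_const ‖b‖)
  filter_upwards [eventually_gt_atTop 0] with R hR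
  rw [norm_sub_rev, le_div_iff₀' (norm_pos_iff.2 hb0), ← one_div]
  exact norm_mul_norm_sub_integral_cexp_neg_mul_sq_le hb hb0 hR

end GaussianIntegral

lemma integral_one_div_sqrt_smul_comp_sqrt {E : Type*} [NormedAddCommGroup E] [NormedSpace ℝ E]
    (g : ℝ → E) (R : ℝ) :
    ∫ u in (0 : ℝ)..R, (1 / √u) • g √u = (2 : ℝ) • ∫ x in (0 : ℝ)..√R, g x := by
  have hderiv (u : ℝ) (hu : u ∈ Ioo (min 0 R) (max 0 R)) : HasDerivAt (√·) (1 / (2 * √u)) u :=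
    Real.hasDerivAt_sqrt (by grind)
  have hsubst := intervalIntegral.integral_deriv_smul_comp_of_deriv_nonneg (g := g)
    Real.continuous_sqrt.continuousOn hderiv (fun u _ ↦ by positivity)
  rw [Real.sqrt_zero] at hsubst
  rw [← hsubst, ← intervalIntegral.integral_smul]
  simp only [Function.comp_apply, smul_smul]
  congr! 3
  ring

lemma integral_one_div_sqrt_mul_cexp_neg_mul (b : ℂ) {R : ℝ} (hR : 0 ≤ R) :
    ∫ u in (0 : ℝ)..R, (1 / (√u : ℂ)) * cexp (-b * u) =
      2 * ∫ x in (0 : ℝ)..√R, cexp (-b * x ^ 2) := by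
  calc
    _ = ∫ u in (0 : ℝ)..R, (1 / √u) • cexp (-b * √u ^ 2) := by
      refine intervalIntegral.integral_congr fun u hu ↦ ?_
      have hu0 : 0 ≤ u := (uIcc_of_le hR ▸ hu).1
      have hsq : (√u : ℂ) ^ 2 = u := by exact_mod_cast Real.sq_sqrt hu0
      simp only [hsq, real_smul, ofReal_div, ofReal_one]
    _ = _ := by
      rw [integral_one_div_sqrt_smul_comp_sqrt fun x : ℝ ↦ cexp (-b * x ^ 2), real_smul,
        ofReal_ofNat]

lemma cpow_one_half_eq_cexp_arg_mul_sqrt_norm (z : ℂ) :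
    z ^ (1 / 2 : ℂ) = cexp (arg z / 2 * I) * √‖z‖ := by
  rcases eq_or_ne z 0 with rfl | hz
  · simp
  have hsqrt : (√‖z‖ : ℂ) = cexp (Real.log ‖z‖ / 2) := by
    rw [Real.sqrt_eq_rpow, Real.rpow_def_of_pos (norm_pos_iff.2 hz)]
    push_cast
    ring_nf
  rw [cpow_def_of_ne_zero hz, log, hsqrt, ← exp_add]
  ring_nf

lemma pi_mul_I_div_cpow_one_half {σ : ℝ} (hσ : σ = 1 ∨ σ = -1) :
    (π * I / σ) ^ (1 / 2 : ℂ) = cexp (π * I / 4 * σ) * √π := by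
  have hnorm : ‖(π * I / σ : ℂ)‖ = π := by
    rcases hσ with rfl | rfl <;> simp [Real.pi_nonneg]
  have harg : arg (π * I / σ) = π / 2 * σ := by
    rcases hσ with rfl | rfl
    · simp [arg_real_mul I Real.pi_pos]
    · have hneg : π * I / ((-1 : ℝ) : ℂ) = π * -I := by push_cast; ring
      rw [hneg, arg_real_mul _ Real.pi_pos, arg_neg_I]
      ring
  rw [cpow_one_half_eq_cexp_arg_mul_sqrt_norm, hnorm, harg]
  push_cast
  ring_nf

theorem improper_fresnel_integral_general {σ : ℂ} (hσ : 0 ≤ σ.im) (hσ0 : σ ≠ 0) :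
    Tendsto (fun R : ℝ ↦ ∫ u in (0 : ℝ)..R, (1 / (√u : ℂ)) * cexp (I * u * σ)) atTop
      (𝓝 ((π * I / σ) ^ (1 / 2 : ℂ))) := by
  have hgauss := ((tendsto_integral_cexp_neg_mul_sq (b := -(I * σ)) (by simpa) (by simpa)).comp
    Real.tendsto_sqrt_atTop).const_mul 2
  have hvalue : π / -(I * σ) = π * I / σ := by
    rw [← neg_mul, ← div_div, div_neg, div_I, neg_neg]
  rw [hvalue, mul_div_cancel₀ _ two_ne_zero] at hgauss
  refine hgauss.congr' ?_
  filter_upwards [eventually_ge_atTop 0] with R hR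
  have hexp (u : ℝ) : I * u * σ = -(-(I * σ)) * u := by ring
  simp only [hexp, Function.comp_apply, integral_one_div_sqrt_mul_cexp_neg_mul _ hR]

theorem improper_fresnel_integral (σ : ℝ) (hσ : σ = 1 ∨ σ = -1) :
    Tendsto (fun R : ℝ => ∫ u in (0:ℝ)..R, (1 / (Real.sqrt u : ℂ)) * Complex.exp (Complex.I * u * σ))
      atTop
      (nhds (Complex.exp (Real.pi * Complex.I / 4 * (σ : ℂ)) * (Real.sqrt Real.pi : ℂ))) := by
  rw [← pi_mul_I_div_cpow_one_half hσ]
  exact improper_fresnel_integral_general (ofReal_im σ).ge (by rcases hσ with rfl | rfl <;> simp)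
end
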